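/- For all integers n ≥ 0 and all natural numbers i, j, the number of pairs (c, E), where c : Fin n → Bool is a choice with exactly i indices k satisfying c k = false and E is a noncrossing contraction with exactly j edges of the word of (a + (a†)²)^n associated to c, equals the number of L-lattice paths in P_n with exactly j occurrences of the consecutive step triple H,D,D and exactly i occurrences of the consecutive step pair H,D. -/

import Mathlib

/-- Two edges `(i,j)` and `(p,q)` cross if `i < p < j < q` or `p < i < q < j`. -/
def Crosses {N : ℕ} (e f : Fin N × Fin N) : Prop :=
  (e.1 < f.1 ∧ f.1 < e.2 ∧ e.2 < f.2) ∨ (f.1 < e.1 ∧ e.1 < f.2 ∧ f.2 < e.2)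

/-- A contraction of the word `w`: a set of edges `(i,j)` with `i < j`, `w i = false` (an `a`),
`w j = true` (an `a†`), whose endpoints are pairwise distinct. -/
def IsContraction {N : ℕ} (w : Fin N → Bool) (E : Finset (Fin N × Fin N)) : Prop :=
  (∀ e ∈ E, e.1 < e.2 ∧ w e.1 = false ∧ w e.2 = true) ∧
  (∀ e ∈ E, ∀ f ∈ E, e ≠ f → e.1 ≠ f.1 ∧ e.1 ≠ f.2 ∧ e.2 ≠ f.1 ∧ e.2 ≠ f.2)

/-- A set of edges is noncrossing if no two of its edges cross. -/
def IsNoncrossing {N : ℕ} (E : Finset (Fin N × Fin N)) : Prop :=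
  ∀ e ∈ E, ∀ f ∈ E, ¬ Crosses e f

/-- The number of noncrossing contractions of `w` with exactly `m` edges. -/
noncomputable def ncCount {N : ℕ} (w : Fin N → Bool) (m : ℕ) : ℕ :=
  Nat.card {E : Finset (Fin N × Fin N) //
    IsContraction w E ∧ IsNoncrossing E ∧ E.card = m}

/-- The word of `(a + (a†)^s)^n` associated to a choice `c : Fin n → Bool`: block `k` consists of
the single letter `a` (`false`) if `c k = false`, and of `s` copies of `a†` (`true`) otherwise. -/
def wordChoiceAS (s : ℕ) {n : ℕ} (c : Fin n → Bool) : List Bool :=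
  (List.ofFn c).flatMap (fun b => if b then List.replicate s true else [false])

/-- The number of pairs `(c, E)` where `c` is a choice for `(a + (a†)^s)^n` with exactly `i`
indices `k` satisfying `c k = false`, and `E` is a noncrossing contraction of the associated
word with exactly `j` edges. -/
noncomputable def pairCountAS (s n j i : ℕ) : ℕ :=
  Nat.card {p : Σ c : Fin n → Bool,
      Finset (Fin (wordChoiceAS s c).length × Fin (wordChoiceAS s c).length) //
    (Finset.univ.filter (fun k => p.1 k = false)).card = i ∧
    IsContraction (wordChoiceAS s p.1).get p.2 ∧ IsNoncrossing p.2 ∧ p.2.card = j}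

/-- Steps of an L-lattice path. -/
inductive LStep : Type
  | H : LStep
  | D : LStep
  | L : LStep
deriving DecidableEq

/-- The move of a step: `H = (2,1)`, `D = (1,-1)`, `L = (1,2)`. -/
def LStep.move : LStep → ℤ × ℤ
  | .H => (2, 1)
  | .D => (1, -1)
  | .L => (1, 2)

/-- `p ∈ P_n`: an L-lattice path from `(0,0)` to `(3n,0)` which never goes below the `x`-axis
and has no three consecutive `D` steps. -/
def InPn (n : ℕ) (p : List LStep) : Prop :=
  (p.map LStep.move).sum = ((3 * n : ℤ), (0 : ℤ)) ∧
  (∀ q : List LStep, q <+: p → 0 ≤ ((q.map LStep.move).sum).2) ∧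
  ¬ ([LStep.D, LStep.D, LStep.D] <:+: p)

/-- The number of occurrences of the consecutive step pattern `pat` in the path `p`. -/
def occCount (pat p : List LStep) : ℕ :=
  ((List.range p.length).filter (fun k => (p.drop k).take pat.length = pat)).length

namespace NoncrossingPath

/-! Words are read from right to left: a list `w` stands for the word `w.reverse`, so that its head
is the last letter, at position `w.tail.length`. -/

/-- `E` is a noncrossing contraction of `w.reverse`, and `P` is a decreasing list of white vertices
which are not used by `E` and not nested below any edge of `E`. -/
structure PartialContraction (w : List Bool) (E : Finset (ℕ × ℕ)) (P : List ℕ) : Prop where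
  edge : ∀ e ∈ E, e.1 < e.2 ∧ w.reverse[e.1]? = some false ∧ w.reverse[e.2]? = some true
  fst_inj : ∀ e ∈ E, ∀ f ∈ E, e.1 = f.1 → e = f
  snd_inj : ∀ e ∈ E, ∀ f ∈ E, e.2 = f.2 → e = f
  noncrossing : ∀ e ∈ E, ∀ f ∈ E, ¬ (e.1 < f.1 ∧ f.1 < e.2 ∧ e.2 < f.2)
  sorted : P.Pairwise (· > ·)
  pending : ∀ p ∈ P, w.reverse[p]? = some false ∧ ∀ e ∈ E, e.1 ≠ p ∧ ¬ (e.1 < p ∧ p < e.2)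

theorem getElem?_reverse_cons (b c : Bool) (w : List Bool) (k : ℕ) :
    (b :: w).reverse[k]? = some c ↔ w.reverse[k]? = some c ∨ (k = w.length ∧ b = c) := by
  rw [List.reverse_cons, List.getElem?_append]
  split_ifs with h
  · simp at h
    constructor
    · exact Or.inl
    · rintro (h' | ⟨rfl, -⟩)
      · exact h'
      · omega
  · simp only [List.length_reverse, not_lt] at h
    rw [List.getElem?_eq_none (l := w.reverse) (by simpa using h)]
    simp [List.getElem?_singleton]
    omega

theorem lt_of_getElem?_reverse {w : List Bool} {k : ℕ} {c : Bool}
    (h : w.reverse[k]? = some c) : k < w.length := by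
  simpa using (List.getElem?_eq_some_iff.1 h).1

theorem PartialContraction.cons {w : List Bool} {E : Finset (ℕ × ℕ)} {P : List ℕ}
    (h : PartialContraction w E P) (b : Bool) : PartialContraction (b :: w) E P where
  edge e he := by
    simp only [getElem?_reverse_cons]
    have := h.edge e he
    tauto
  fst_inj := h.fst_inj
  snd_inj := h.snd_inj
  noncrossing := h.noncrossing
  sorted := h.sorted
  pending p hp := by
    simp only [getElem?_reverse_cons]
    have := h.pending p hp
    tauto

theorem partialContraction_false_cons (w : List Bool) (E : Finset (ℕ × ℕ)) (P : List ℕ) :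
    PartialContraction (false :: w) E P ↔
      PartialContraction w E P ∨ ∃ P', P = w.length :: P' ∧ PartialContraction w E P' := by
  constructor
  · intro h
    have hE : ∀ e ∈ E, e.1 < e.2 ∧ w.reverse[e.1]? = some false ∧
        w.reverse[e.2]? = some true := by
      intro e he
      obtain ⟨h1, h2, h3⟩ := h.edge e he
      rw [getElem?_reverse_cons] at h2 h3
      have h3' : w.reverse[e.2]? = some true := by simpa using h3
      have := lt_of_getElem?_reverse h3'
      refine ⟨h1, ?_, h3'⟩
      rcases h2 with h2 | h2
      · exact h2
      · omega
    have hP := fun p hp => (h.pending p hp).1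
    simp only [getElem?_reverse_cons, and_true] at hP
    by_cases hN : w.length ∈ P
    · right
      obtain _ | ⟨q, P'⟩ := P
      · simp at hN
      have hs := List.pairwise_cons.1 h.sorted
      have hq : q = w.length := by
        rcases hP q (by simp) with hq | hq
        · have := lt_of_getElem?_reverse hq
          rcases List.mem_cons.1 hN with hN | hN
          · exact hN.symm
          · have := hs.1 _ hN
            omega
        · exact hq
      subst hq
      refine ⟨P', rfl, hE, h.fst_inj, h.snd_inj, h.noncrossing, hs.2, fun p hp => ⟨?_, ?_⟩⟩
      · have := hs.1 p hp
        rcases hP p (by simp [hp]) with hp | hp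
        · exact hp
        · omega
      · exact (h.pending p (by simp [hp])).2
    · left
      refine ⟨hE, h.fst_inj, h.snd_inj, h.noncrossing, h.sorted, fun p hp => ⟨?_, ?_⟩⟩
      · rcases hP p hp with hp' | rfl
        · exact hp'
        · contradiction
      · exact (h.pending p hp).2
  · rintro (h | ⟨P', rfl, h⟩)
    · exact h.cons _
    · have h' := h.cons false
      refine ⟨h'.edge, h.fst_inj, h.snd_inj, h.noncrossing,
        List.pairwise_cons.2 ⟨fun p hp => lt_of_getElem?_reverse (h.pending p hp).1, h.sorted⟩, ?_⟩
      intro p hp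
      rcases List.mem_cons.1 hp with rfl | hp
      · refine ⟨by simp, fun e he => ?_⟩
        have h1 := lt_of_getElem?_reverse (h.edge e he).2.1
        have h2 := lt_of_getElem?_reverse (h.edge e he).2.2
        omega
      · exact h'.pending p hp

theorem partialContraction_true_cons (w : List Bool) (E : Finset (ℕ × ℕ)) (P : List ℕ) :
    PartialContraction (true :: w) E P ↔
      PartialContraction w E P ∨
        ∃ p E', E = insert (p, w.length) E' ∧ PartialContraction w E' (p :: P) := by
  constructor
  · intro h
    have hE : ∀ e ∈ E, w.reverse[e.1]? = some false := fun e he => by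
      simpa [-List.reverse_cons, getElem?_reverse_cons] using (h.edge e he).2.1
    have hP : ∀ p ∈ P, w.reverse[p]? = some false := fun p hp => by
      simpa [-List.reverse_cons, getElem?_reverse_cons] using (h.pending p hp).1
    have hE2 : ∀ e ∈ E, e.2 ≠ w.length → w.reverse[e.2]? = some true := fun e he hne => by
      simpa [-List.reverse_cons, getElem?_reverse_cons, hne] using (h.edge e he).2.2
    by_cases hN : ∃ e ∈ E, e.2 = w.length
    · right
      obtain ⟨⟨p, q⟩, he, hq⟩ := hN
      obtain rfl : q = w.length := hq
      have hne : ∀ f ∈ E.erase (p, w.length), f ∈ E ∧ w.reverse[f.2]? = some true := by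
        intro f hf
        obtain ⟨hf1, hf⟩ := Finset.mem_erase.1 hf
        exact ⟨hf, hE2 f hf fun h2 => hf1 (h.snd_inj f hf _ he h2)⟩
      refine ⟨p, E.erase (p, w.length), (Finset.insert_erase he).symm, ?_, ?_, ?_, ?_, ?_, ?_⟩
      · exact fun f hf => ⟨(h.edge f (hne f hf).1).1, hE f (hne f hf).1, (hne f hf).2⟩
      · exact fun e he f hf => h.fst_inj e (hne e he).1 f (hne f hf).1
      · exact fun e he f hf => h.snd_inj e (hne e he).1 f (hne f hf).1
      · exact fun e he f hf => h.noncrossing e (hne e he).1 f (hne f hf).1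
      · refine List.pairwise_cons.2 ⟨fun r hr => ?_, h.sorted⟩
        have h1 := (h.pending r hr).2 _ he
        have h2 := lt_of_getElem?_reverse (hP r hr)
        simp only at h1
        omega
      · intro r hr
        rcases List.mem_cons.1 hr with rfl | hr
        · refine ⟨hE _ he, fun f hf => ⟨fun h1 => ?_, fun h1 => ?_⟩⟩
          · exact (Finset.mem_erase.1 hf).1 (h.fst_inj f (hne f hf).1 _ he h1)
          · exact h.noncrossing f (hne f hf).1 _ he
              ⟨h1.1, h1.2, lt_of_getElem?_reverse (hne f hf).2⟩
        · exact ⟨hP r hr, fun f hf => (h.pending r hr).2 f (hne f hf).1⟩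
    · left
      push Not at hN
      exact ⟨fun e he => ⟨(h.edge e he).1, hE e he, hE2 e he (hN e he)⟩, h.fst_inj, h.snd_inj,
        h.noncrossing, h.sorted, fun p hp => ⟨hP p hp, (h.pending p hp).2⟩⟩
  · rintro (h | ⟨p, E, rfl, h⟩)
    · exact h.cons _
    · have h' := h.cons true
      have hs := List.pairwise_cons.1 h.sorted
      have hp := h.pending p (by simp)
      have hpN := lt_of_getElem?_reverse hp.1
      have hlt : ∀ e ∈ E, e.2 < w.length := fun e he =>
        lt_of_getElem?_reverse (h.edge e he).2.2
      refine ⟨?_, ?_, ?_, ?_, hs.2, ?_⟩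
      · intro e he
        rcases Finset.mem_insert.1 he with rfl | he
        · exact ⟨hpN, by simp [-List.reverse_cons, getElem?_reverse_cons, hp.1], by simp⟩
        · exact h'.edge e he
      · intro e he f hf hef
        rcases Finset.mem_insert.1 he with rfl | he <;> rcases Finset.mem_insert.1 hf with rfl | hf
        · rfl
        · exact absurd hef.symm (hp.2 f hf).1
        · exact absurd hef (hp.2 e he).1
        · exact h.fst_inj e he f hf hef
      · intro e he f hf hef
        rcases Finset.mem_insert.1 he with rfl | he <;> rcases Finset.mem_insert.1 hf with rfl | hf
        · rfl
        · exact absurd hef.symm (hlt f hf).ne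
        · exact absurd hef (hlt e he).ne
        · exact h.snd_inj e he f hf hef
      · intro e he f hf hef
        rcases Finset.mem_insert.1 he with rfl | he <;> rcases Finset.mem_insert.1 hf with rfl | hf
        · exact lt_irrefl _ hef.1
        · exact lt_asymm (hlt f hf) hef.2.2
        · exact (hp.2 e he).2 ⟨hef.1, hef.2.1⟩
        · exact h.noncrossing e he f hf hef
      · intro r hr
        have hr' := h'.pending r (by simp [hr])
        refine ⟨hr'.1, fun e he => ?_⟩
        rcases Finset.mem_insert.1 he with rfl | he
        · have := hs.1 r hr
          simp only
          omega
        · exact hr'.2 e he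

/-- Labelled letters `(b, m)`: `m` tells whether the letter is matched. The predicate says that the
word, read from right to left and starting with `h` edges open, is a ballot sequence ending at
height `0`. -/
def Ballot : List (Bool × Bool) → ℕ → Prop
  | [], h => h = 0
  | (_, false) :: x, h => Ballot x h
  | (false, true) :: x, h => ∃ h', h = h' + 1 ∧ Ballot x h'
  | (true, true) :: x, h => Ballot x (h + 1)

/-- The edges and the stack of open vertices obtained by matching each matched black letter with
the most recent open vertex. -/
def build : List (Bool × Bool) → Finset (ℕ × ℕ) × List ℕ
  | [] => (∅, [])
  | (_, false) :: x => build x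
  | (false, true) :: x => ((build x).1, x.length :: (build x).2)
  | (true, true) :: x =>
      (insert ((build x).2.headI, x.length) (build x).1, (build x).2.tail)

theorem length_build {x : List (Bool × Bool)} {h : ℕ} (hx : Ballot x h) :
    (build x).2.length = h := by
  induction x generalizing h with
  | nil => exact hx.symm
  | cons a x ih =>
    obtain ⟨b, _ | _⟩ := a
    · exact ih hx
    · cases b
      · obtain ⟨h', rfl, hx⟩ := hx
        simp [build, ih hx]
      · simp [build, ih hx]

theorem partialContraction_iff (w : List Bool) (E : Finset (ℕ × ℕ)) (P : List ℕ) :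
    PartialContraction w E P ↔
      ∃ x : List (Bool × Bool), x.map Prod.fst = w ∧ Ballot x P.length ∧ build x = (E, P) := by
  induction w generalizing E P with
  | nil =>
    constructor
    · intro h
      have hE : E = ∅ := Finset.eq_empty_of_forall_notMem fun e he => by
        simpa using (h.edge e he).2.1
      have hP : P = [] := List.eq_nil_iff_forall_not_mem.2 fun p hp => by
        simpa using (h.pending p hp).1
      subst hE hP
      exact ⟨[], rfl, rfl, rfl⟩
    · rintro ⟨x, hx, -, hb⟩
      obtain rfl : x = [] := by simpa using hx
      obtain ⟨rfl, rfl⟩ := Prod.mk.inj hb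
      constructor <;> simp
  | cons b w ih =>
    cases b
    · rw [partialContraction_false_cons]
      constructor
      · rintro (h | ⟨P', rfl, h⟩) <;> obtain ⟨x, rfl, hx, hb⟩ := (ih _ _).1 h
        · exact ⟨(false, false) :: x, rfl, hx, hb⟩
        · exact ⟨(false, true) :: x, rfl, ⟨_, rfl, hx⟩, by simp [build, hb]⟩
      · rintro ⟨_ | ⟨⟨b, _ | _⟩, x⟩, hw, hx, hb⟩
        · simp at hw
        · obtain ⟨rfl, rfl⟩ := List.cons.inj hw
          exact Or.inl ((ih _ _).2 ⟨x, rfl, hx, hb⟩)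
        · obtain ⟨h1, rfl⟩ := List.cons.inj hw
          obtain rfl : b = false := h1
          obtain ⟨h', hh, hx⟩ := hx
          obtain ⟨rfl, rfl⟩ := Prod.mk.inj hb
          exact Or.inr ⟨(build x).2, by simp,
            (ih _ _).2 ⟨x, rfl, by rwa [length_build hx], rfl⟩⟩
    · rw [partialContraction_true_cons]
      constructor
      · rintro (h | ⟨p, E', rfl, h⟩) <;> obtain ⟨x, rfl, hx, hb⟩ := (ih _ _).1 h
        · exact ⟨(true, false) :: x, rfl, hx, hb⟩
        · exact ⟨(true, true) :: x, rfl, hx, by simp [build, hb]⟩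
      · rintro ⟨_ | ⟨⟨b, _ | _⟩, x⟩, hw, hx, hb⟩
        · simp at hw
        · obtain ⟨rfl, rfl⟩ := List.cons.inj hw
          exact Or.inl ((ih _ _).2 ⟨x, rfl, hx, hb⟩)
        · obtain ⟨h1, rfl⟩ := List.cons.inj hw
          obtain rfl : b = true := h1
          have hl := length_build (x := x) hx
          obtain ⟨rfl, rfl⟩ := Prod.mk.inj hb
          have hne : (build x).2 ≠ [] := fun h0 => by simp [h0] at hl
          have hc : (build x).2.headI :: (build x).2.tail = (build x).2 := by
            cases h : (build x).2
            · contradiction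
            · rfl
          refine Or.inr ⟨(build x).2.headI, (build x).1, by simp, ?_⟩
          rw [hc]
          exact (ih _ _).2 ⟨x, rfl, by rw [hl]; exact hx, rfl⟩

theorem partialContraction_build {x : List (Bool × Bool)} {h : ℕ} (hx : Ballot x h) :
    PartialContraction (x.map Prod.fst) (build x).1 (build x).2 :=
  (partialContraction_iff _ _ _).2 ⟨x, rfl, by rwa [length_build hx], rfl⟩

theorem snd_lt_of_mem_build {x : List (Bool × Bool)} {h : ℕ} (hx : Ballot x h)
    {e : ℕ × ℕ} (he : e ∈ (build x).1) : e.2 < x.length := by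
  simpa using lt_of_getElem?_reverse ((partialContraction_build hx).edge e he).2.2

theorem lt_of_mem_build {x : List (Bool × Bool)} {h : ℕ} (hx : Ballot x h)
    {p : ℕ} (hp : p ∈ (build x).2) : p < x.length := by
  simpa using lt_of_getElem?_reverse ((partialContraction_build hx).pending p hp).1

theorem build_injective {x y : List (Bool × Bool)} {h : ℕ} (hx : Ballot x h) (hy : Ballot y h)
    (hw : x.map Prod.fst = y.map Prod.fst) (hb : build x = build y) : x = y := by
  induction x generalizing y h with
  | nil => exact (List.map_eq_nil_iff.1 hw.symm).symm
  | cons a x ih =>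
    obtain _ | ⟨a', y⟩ := y
    · simp at hw
    obtain ⟨b, m⟩ := a
    obtain ⟨b', m'⟩ := a'
    obtain ⟨h1, hw'⟩ := List.cons.inj hw
    obtain rfl : b = b' := h1
    replace hw : x.map Prod.fst = y.map Prod.fst := hw'
    have hlen : x.length = y.length := by simpa using congrArg List.length hw
    cases m <;> cases m'
    · rw [ih (y := y) hx hy hw hb]
    · exfalso
      cases b
      · have : y.length ∈ (build x).2 := by
          rw [show build x = _ from hb]; simp [build]
        have := lt_of_mem_build (x := x) hx this
        omega
      · have : ((build y).2.headI, y.length) ∈ (build x).1 := by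
          rw [show build x = _ from hb]; simp [build]
        have := snd_lt_of_mem_build (x := x) hx this
        simp only at this
        omega
    · exfalso
      cases b
      · have : x.length ∈ (build y).2 := by
          rw [show build y = _ from hb.symm]; simp [build]
        have := lt_of_mem_build (x := y) hy this
        omega
      · have : ((build x).2.headI, x.length) ∈ (build y).1 := by
          rw [show build y = _ from hb.symm]; simp [build]
        have := snd_lt_of_mem_build (x := y) hy this
        simp only at this
        omega
    · cases b
      · obtain ⟨k, rfl, hx⟩ := hx
        obtain ⟨k', hk, hy⟩ := hy
        obtain rfl : k = k' := by omega
        obtain ⟨h1, h2⟩ := Prod.mk.inj hb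
        rw [ih hx hy hw (Prod.ext h1 (List.cons.inj h2).2)]
      · have hx : Ballot x (h + 1) := hx
        have hy : Ballot y (h + 1) := hy
        obtain ⟨h1, h2⟩ := Prod.mk.inj hb
        have hnx : ∀ p, (p, x.length) ∉ (build x).1 := fun p hp =>
          (snd_lt_of_mem_build hx hp).false
        have hny : ∀ p, (p, x.length) ∉ (build y).1 := fun p hp => by
          have := snd_lt_of_mem_build hy hp
          simp only at this
          omega
        rw [← hlen] at h1
        have hp : (build x).2.headI = (build y).2.headI := by
          have : ((build x).2.headI, x.length) ∈
              insert ((build y).2.headI, x.length) (build y).1 := by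
            rw [← h1]; exact Finset.mem_insert_self _ _
          rcases Finset.mem_insert.1 this with h | h
          · exact (Prod.mk.inj h).1
          · exact absurd h (hny _)
        have hE : (build x).1 = (build y).1 := by
          rw [← Finset.erase_insert (hnx (build x).2.headI), h1, hp,
            Finset.erase_insert (hny _)]
        have lx := length_build hx
        have ly := length_build hy
        have hP : (build x).2 = (build y).2 := by
          revert lx ly hp h2
          rcases (build x).2 with _ | ⟨p, P⟩ <;> rcases (build y).2 with _ | ⟨q, Q⟩ <;> simp
          tauto
        rw [ih hx hy hw (Prod.ext hE hP)]

theorem card_build {x : List (Bool × Bool)} {h : ℕ} (hx : Ballot x h) :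
    (build x).1.card + h = x.count (false, true) := by
  induction x generalizing h with
  | nil => simpa [build, Ballot] using hx
  | cons a x ih =>
    obtain ⟨b, _ | _⟩ := a
    · simpa [build] using ih (h := h) hx
    · cases b
      · obtain ⟨h', rfl, hx⟩ := hx
        have := ih hx
        simp [build]
        omega
      · have hx : Ballot x (h + 1) := hx
        have := ih hx
        have hn : ((build x).2.headI, x.length) ∉ (build x).1 := fun hp =>
          (snd_lt_of_mem_build hx hp).false
        simp [build, Finset.card_insert_of_notMem hn]
        omega

/-- A block of `(a + (a†)²)^n` with labelled letters. -/
inductive Block : Type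
  | white (m : Bool) : Block
  | black (m₁ m₂ : Bool) : Block

namespace Block

/-- Whether the block is `(a†)²`. -/
def color : Block → Bool
  | white _ => false
  | black _ _ => true

/-- The labelled letters of a block. -/
def letters : Block → List (Bool × Bool)
  | white m => [(false, m)]
  | black m₁ m₂ => [(true, m₁), (true, m₂)]

/-- The piece of L-lattice path associated with a block. -/
def steps : Block → List LStep
  | white false => [.H, .D]
  | white true => [.H, .D, .D]
  | black false false => [.L, .D, .D]
  | black false true => [.H]
  | black true false => [.L, .D]
  | black true true => [.L]

end Block

/-- The reversed word of a reversed list of choices. -/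
def word (c : List Bool) : List Bool :=
  c.flatMap fun b => if b then [true, true] else [false]

theorem map_fst_letters (l : List Block) :
    (l.flatMap Block.letters).map Prod.fst = word (l.map Block.color) := by
  induction l with
  | nil => rfl
  | cons b l ih =>
    cases b <;> simpa [word, Block.letters, Block.color] using ih

theorem exists_letters_eq (c : List Bool) (x : List (Bool × Bool))
    (hx : x.map Prod.fst = word c) :
    ∃ l : List Block, l.map Block.color = c ∧ l.flatMap Block.letters = x := by
  induction c generalizing x with
  | nil => exact ⟨[], rfl, (List.map_eq_nil_iff.1 hx).symm⟩
  | cons b c ih =>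
    cases b
    · rcases x with _ | ⟨⟨b, m⟩, x⟩
      · simp [word] at hx
      · obtain ⟨h1, hx'⟩ := List.cons.inj hx
        obtain rfl : b = false := h1
        obtain ⟨l, rfl, rfl⟩ := ih x hx'
        exact ⟨.white m :: l, rfl, rfl⟩
    · rcases x with _ | ⟨⟨b, m⟩, _ | ⟨⟨b', m'⟩, x⟩⟩
      · simp [word] at hx
      · simp [word] at hx
      · obtain ⟨h1, hx₁⟩ := List.cons.inj hx
        obtain ⟨h2, hx'⟩ := List.cons.inj hx₁
        obtain rfl : b = true := h1
        obtain rfl : b' = true := h2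
        obtain ⟨l, rfl, rfl⟩ := ih x hx'
        exact ⟨.black m m' :: l, rfl, rfl⟩

theorem letters_injective :
    Function.Injective fun l : List Block => l.flatMap Block.letters := by
  intro l l' h
  induction l generalizing l' with
  | nil => rcases l' with _ | ⟨_ | _, l'⟩ <;> simp [Block.letters] at h ⊢
  | cons b l ih =>
    rcases l' with _ | ⟨b', l'⟩
    · cases b <;> simp [Block.letters] at h
    · cases b <;> cases b' <;> simp [Block.letters] at h ⊢
      · exact ⟨h.1, ih h.2⟩
      · exact ⟨⟨h.1, h.2.1⟩, ih h.2.2⟩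

/-- The path starting at height `h` never goes below height `0` and ends at height `0`. -/
def Descends : List LStep → ℕ → Prop
  | [], h => h = 0
  | .H :: p, h => Descends p (h + 1)
  | .D :: p, h => ∃ h', h = h' + 1 ∧ Descends p h'
  | .L :: p, h => Descends p (h + 2)

theorem descends_iff (p : List LStep) (h : ℕ) :
    Descends p h ↔ (∀ q : List LStep, q <+: p → 0 ≤ (h : ℤ) + ((q.map LStep.move).sum).2) ∧
      (h : ℤ) + ((p.map LStep.move).sum).2 = 0 := by
  induction p generalizing h with
  | nil => simp [Descends]
  | cons a p ih =>
    have key : (∀ q : List LStep, q <+: a :: p → 0 ≤ (h : ℤ) + ((q.map LStep.move).sum).2) ↔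
        ∀ q : List LStep, q <+: p → 0 ≤ (h : ℤ) + (a.move.2 + ((q.map LStep.move).sum).2) := by
      constructor
      · intro H q hq
        simpa using H (a :: q) (List.cons_prefix_cons.2 ⟨rfl, hq⟩)
      · intro H q hq
        rcases List.prefix_cons_iff.1 hq with rfl | ⟨t, rfl, ht⟩
        · simp
        · simpa using H t ht
    rw [key]
    cases a
    · simp only [Descends, ih, List.map_cons, List.sum_cons, Prod.snd_add, LStep.move]
      push_cast
      simp only [add_assoc]
    · simp only [Descends, List.map_cons, List.sum_cons, Prod.snd_add, LStep.move]
      constructor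
      · rintro ⟨h', rfl, hp⟩
        obtain ⟨h1, h2⟩ := (ih h').1 hp
        push_cast
        exact ⟨fun q hq => by linarith [h1 q hq], by linarith⟩
      · rintro ⟨h1, h2⟩
        have h0 := h1 [] List.nil_prefix
        simp at h0
        refine ⟨h - 1, by omega, (ih _).2 ?_⟩
        rw [Nat.cast_sub (by omega)]
        push_cast
        exact ⟨fun q hq => by linarith [h1 q hq], by linarith⟩
    · simp only [Descends, ih, List.map_cons, List.sum_cons, Prod.snd_add, LStep.move]
      push_cast
      simp only [add_assoc]

theorem descends_steps (l : List Block) (h : ℕ) :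
    Descends (l.flatMap Block.steps) h ↔ Ballot (l.flatMap Block.letters) h := by
  induction l generalizing h with
  | nil => rfl
  | cons b l ih =>
    rcases b with (_ | _) | ⟨_ | _, _ | _⟩ <;>
      simp [Block.steps, Block.letters, Descends, Ballot, ih]

theorem sum_move_steps (l : List Block) :
    (((l.flatMap Block.steps).map LStep.move).sum).1 +
      (((l.flatMap Block.steps).map LStep.move).sum).2 = 3 * l.length := by
  induction l with
  | nil => rfl
  | cons b l ih =>
    rcases b with (_ | _) | ⟨_ | _, _ | _⟩ <;>
      simp [Block.steps, LStep.move] at ih ⊢ <;> linarith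

theorem not_infix_steps (l : List Block) :
    ¬ [LStep.D, LStep.D, LStep.D] <:+: l.flatMap Block.steps := by
  induction l with
  | nil => simp
  | cons b l ih =>
    have hl : ∀ t, l.flatMap Block.steps ≠ .D :: t := by
      rcases l with _ | ⟨(_ | _) | ⟨_ | _, _ | _⟩, l⟩ <;> simp [Block.steps]
    have hp : ∀ t, ¬ LStep.D :: t <+: l.flatMap Block.steps := fun t ⟨u, hu⟩ => hl _ hu.symm
    rcases b with (_ | _) | ⟨_ | _, _ | _⟩ <;>
      simp [Block.steps, List.infix_cons_iff, List.cons_prefix_cons, ih, hp]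

theorem exists_steps_eq (p : List LStep) (hp : ¬ [LStep.D, LStep.D, LStep.D] <:+: p) :
    ∃ k < 3, ∃ l : List Block, p = List.replicate k .D ++ l.flatMap Block.steps := by
  induction p with
  | nil => exact ⟨0, by simp, [], rfl⟩
  | cons a p ih =>
    obtain ⟨k, hk, l, rfl⟩ := ih fun h => hp (List.infix_cons h)
    cases a
    · refine ⟨0, by simp, ?_⟩
      interval_cases k
      · exact ⟨.black false true :: l, rfl⟩
      · exact ⟨.white false :: l, rfl⟩
      · exact ⟨.white true :: l, rfl⟩
    · refine ⟨k + 1, ?_, l, rfl⟩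
      by_contra hk'
      obtain rfl : k = 2 := by omega
      exact hp ⟨[], l.flatMap Block.steps, rfl⟩
    · refine ⟨0, by simp, ?_⟩
      interval_cases k
      · exact ⟨.black true true :: l, rfl⟩
      · exact ⟨.black true false :: l, rfl⟩
      · exact ⟨.black false false :: l, rfl⟩

theorem steps_injective :
    Function.Injective fun l : List Block => l.flatMap Block.steps := by
  intro l l' h
  induction l generalizing l' with
  | nil => rcases l' with _ | ⟨(_ | _) | ⟨_ | _, _ | _⟩, l'⟩ <;> simp [Block.steps] at h ⊢
  | cons b l ih =>
    have hD : ∀ (l : List Block) t, l.flatMap Block.steps ≠ .D :: t := by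
      rintro (_ | ⟨(_ | _) | ⟨_ | _, _ | _⟩, l⟩) <;> simp [Block.steps]
    have hD' : ∀ (l : List Block) t, .D :: t ≠ l.flatMap Block.steps := fun l t => (hD l t).symm
    rcases l' with _ | ⟨b', l'⟩
    · rcases b with (_ | _) | ⟨_ | _, _ | _⟩ <;> simp [Block.steps] at h
    · rcases b with (_ | _) | ⟨_ | _, _ | _⟩ <;> rcases b' with (_ | _) | ⟨_ | _, _ | _⟩ <;>
        simp [Block.steps, hD, hD'] at h ⊢ <;> exact ih h

theorem occCount_cons (pat : List LStep) (a : LStep) (p : List LStep) :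
    occCount pat (a :: p) =
      (if (a :: p).take pat.length = pat then 1 else 0) + occCount pat p := by
  simp only [occCount, List.length_cons, List.range_succ_eq_map, List.filter_cons,
    List.filter_map, Function.comp_def, List.drop_succ_cons, List.drop_zero]
  split_ifs <;> simp_all [add_comm]

theorem occCount_HDD_steps (l : List Block) :
    occCount [.H, .D, .D] (l.flatMap Block.steps) =
      (l.flatMap Block.letters).count (false, true) := by
  induction l with
  | nil => rfl
  | cons b l ih =>
    have hl : (l.flatMap Block.steps).take 1 ≠ [.D] := by
      rcases l with _ | ⟨(_ | _) | ⟨_ | _, _ | _⟩, l⟩ <;> simp [Block.steps]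
    have hl' : (l.flatMap Block.steps).take 2 ≠ [.D, .D] := by
      rcases l with _ | ⟨(_ | _) | ⟨_ | _, _ | _⟩, l⟩ <;> simp [Block.steps]
    rcases b with (_ | _) | ⟨_ | _, _ | _⟩ <;>
      simp [Block.steps, Block.letters, occCount_cons, ih, hl, hl', add_comm]

theorem occCount_HD_steps (l : List Block) :
    occCount [.H, .D] (l.flatMap Block.steps) = (l.map Block.color).count false := by
  induction l with
  | nil => rfl
  | cons b l ih =>
    have hl : (l.flatMap Block.steps).take 1 ≠ [.D] := by
      rcases l with _ | ⟨(_ | _) | ⟨_ | _, _ | _⟩, l⟩ <;> simp [Block.steps]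
    rcases b with (_ | _) | ⟨_ | _, _ | _⟩ <;>
      simp [Block.steps, Block.color, occCount_cons, ih, hl, add_comm]

theorem inPn_steps (n : ℕ) (l : List Block) :
    InPn n (l.flatMap Block.steps) ↔ l.length = n ∧ Ballot (l.flatMap Block.letters) 0 := by
  have h1 := sum_move_steps l
  rw [← descends_steps, descends_iff, InPn, Prod.ext_iff]
  simp only [not_infix_steps, Nat.cast_zero, zero_add, not_false_eq_true, and_true]
  constructor
  · rintro ⟨⟨h2, h3⟩, h4⟩
    exact ⟨by omega, h4, h3⟩
  · rintro ⟨rfl, h4, h3⟩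
    exact ⟨⟨by omega, h3⟩, h4⟩

/-- Sequences of `n` labelled blocks, read from right to left, with balanced labels, `j` matched
white letters and `i` white blocks. -/
abbrev BlockSeq (n i j : ℕ) : Type :=
  {l : List Block // l.length = n ∧ Ballot (l.flatMap Block.letters) 0 ∧
    (l.flatMap Block.letters).count (false, true) = j ∧ (l.map Block.color).count false = i}

theorem card_blockSeq_eq_card_paths (n i j : ℕ) :
    Nat.card (BlockSeq n i j) = Nat.card {p : List LStep // InPn n p ∧
      occCount [LStep.H, LStep.D, LStep.D] p = j ∧ occCount [LStep.H, LStep.D] p = i} := by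
  refine Nat.card_eq_of_bijective
    (fun l => ⟨l.1.flatMap Block.steps, ?_⟩) ⟨fun l l' h => ?_, ?_⟩
  · rw [inPn_steps, occCount_HDD_steps, occCount_HD_steps]
    exact ⟨⟨l.2.1, l.2.2.1⟩, l.2.2.2⟩
  · exact Subtype.ext (steps_injective (Subtype.ext_iff.1 h))
  · rintro ⟨p, hp, hj, hi⟩
    obtain ⟨k, -, l, rfl⟩ := exists_steps_eq p hp.2.2
    obtain rfl : k = 0 := by
      rcases k with _ | k
      · rfl
      · have := hp.2.1 [.D] (by simp [List.replicate_succ, List.cons_prefix_cons])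
        simp [LStep.move] at this
    rw [List.replicate_zero, List.nil_append] at hp hj hi
    rw [inPn_steps] at hp
    rw [occCount_HDD_steps] at hj
    rw [occCount_HD_steps] at hi
    exact ⟨⟨l, hp.1, hp.2, hj, hi⟩, rfl⟩

/-- Reversed choices of length `n` with `i` white blocks, together with a noncrossing contraction
with `j` edges of the associated word. -/
abbrev ChoiceContraction (n i j : ℕ) : Type :=
  {p : List Bool × Finset (ℕ × ℕ) // p.1.length = n ∧ p.1.count false = i ∧
    PartialContraction (word p.1) p.2 [] ∧ p.2.card = j}

theorem card_blockSeq_eq_card_choiceContraction (n i j : ℕ) :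
    Nat.card (BlockSeq n i j) = Nat.card (ChoiceContraction n i j) := by
  have hnil : ∀ {x}, Ballot x 0 → (build x).2 = [] := fun hx =>
    List.length_eq_zero_iff.1 (length_build hx)
  refine Nat.card_eq_of_bijective
    (fun l => ⟨(l.1.map Block.color, (build (l.1.flatMap Block.letters)).1), ?_⟩)
    ⟨fun l l' h => ?_, ?_⟩
  · obtain ⟨l, hn, hb, hj, hi⟩ := l
    refine ⟨by simpa using hn, hi, ?_, (card_build hb).trans hj⟩
    have := partialContraction_build hb
    rwa [hnil hb, map_fst_letters] at this
  · obtain ⟨h1, h2⟩ := Prod.mk.inj (Subtype.ext_iff.1 h)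
    refine Subtype.ext (letters_injective (build_injective l.2.2.1 l'.2.2.1 ?_ ?_))
    · rw [map_fst_letters, map_fst_letters]
      exact congrArg word h1
    · exact Prod.ext h2 (by rw [hnil l.2.2.1, hnil l'.2.2.1])
  · rintro ⟨⟨c, E⟩, hn, hi, hE, hj⟩
    obtain ⟨x, hx, hb, he⟩ := (partialContraction_iff _ _ _).1 hE
    obtain ⟨l, rfl, rfl⟩ := exists_letters_eq c x hx
    have hb : Ballot (l.flatMap Block.letters) 0 := hb
    have hc := card_build hb
    rw [he] at hc
    exact ⟨⟨l, by simpa using hn, hb, hc.symm.trans hj, hi⟩,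
      Subtype.ext (Prod.ext rfl (congrArg Prod.fst he))⟩

theorem reverse_wordChoiceAS_two {n : ℕ} (c : Fin n → Bool) :
    (wordChoiceAS 2 c).reverse = word (List.ofFn c).reverse := by
  rw [wordChoiceAS, word, List.reverse_flatMap]
  congr 1
  funext b
  cases b <;> rfl

/-- The pairs `(i, j)` of an edge set as pairs of natural numbers. -/
def edgeEmb (N : ℕ) : Fin N × Fin N ↪ ℕ × ℕ :=
  Fin.valEmbedding.prodMap Fin.valEmbedding

theorem partialContraction_map_iff (w : List Bool) (E : Finset (Fin w.length × Fin w.length)) :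
    PartialContraction w.reverse (E.map (edgeEmb w.length)) [] ↔
      IsContraction w.get E ∧ IsNoncrossing E := by
  have hg : ∀ (k : Fin w.length) (b : Bool),
      w.reverse.reverse[(k : ℕ)]? = some b ↔ w.get k = b := by
    intro k b
    simp
  have hE : ∀ {q : ℕ × ℕ → Prop}, (∀ e ∈ E.map (edgeEmb w.length), q e) ↔
      ∀ e ∈ E, q ((e.1 : ℕ), (e.2 : ℕ)) := by
    intro q
    rw [Finset.forall_mem_map]
    rfl
  constructor
  · rintro ⟨h1, h2, h3, h4, -, -⟩
    simp only [hE, hg] at h1 h2 h3 h4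
    have hne : ∀ e ∈ E, ∀ f ∈ E, e.1 ≠ f.2 := fun e he f hf hef => by
      have := (h1 e he).2.1
      rw [hef, (h1 f hf).2.2] at this
      simp at this
    refine ⟨⟨h1, fun e he f hf hef => ⟨fun h => hef ?_, hne e he f hf,
      fun h => hne f hf e he h.symm, fun h => hef ?_⟩⟩, fun e he f hf h => ?_⟩
    · have := h2 e he f hf (by rw [h])
      simpa [Prod.ext_iff, Fin.ext_iff] using this
    · have := h3 e he f hf (by rw [h])
      simpa [Prod.ext_iff, Fin.ext_iff] using this
    · rcases h with h | h
      · exact h4 e he f hf h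
      · exact h4 f hf e he h
  · rintro ⟨⟨h1, h2⟩, h3⟩
    refine ⟨?_, ?_, ?_, ?_, List.Pairwise.nil, by simp⟩
    · simp only [hE, hg]
      exact h1
    · simp only [hE]
      intro e he f hf h
      by_contra hef
      exact (h2 e he f hf fun h' => hef (by rw [h'])).1 (Fin.ext h)
    · simp only [hE]
      intro e he f hf h
      by_contra hef
      exact (h2 e he f hf fun h' => hef (by rw [h'])).2.2.2 (Fin.ext h)
    · simp only [hE]
      exact fun e he f hf h => h3 e he f hf (Or.inl h)

theorem count_ofFn {n : ℕ} (c : Fin n → Bool) (b : Bool) :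
    (List.ofFn c).count b = (Finset.univ.filter fun k => c k = b).card := by
  induction n with
  | zero => simp
  | succ n ih =>
    rw [List.ofFn_succ, List.count_cons, ih, Fin.card_filter_univ_succ]
    split_ifs <;> simp_all

theorem pairCountAS_eq_card_choiceContraction (n i j : ℕ) :
    pairCountAS 2 n j i = Nat.card (ChoiceContraction n i j) := by
  refine Nat.card_eq_of_bijective
    (fun p => ⟨((List.ofFn p.1.1).reverse, p.1.2.map (edgeEmb _)), ?_⟩) ⟨?_, ?_⟩
  · obtain ⟨⟨c, E⟩, hi, hE, hn, hj⟩ := p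
    refine ⟨by simp, by rw [List.count_reverse, count_ofFn, hi], ?_, by rw [Finset.card_map, hj]⟩
    rw [← reverse_wordChoiceAS_two]
    exact (partialContraction_map_iff _ _).2 ⟨hE, hn⟩
  · rintro ⟨⟨c, E⟩, h⟩ ⟨⟨c', E'⟩, h'⟩ heq
    obtain ⟨h1, h2⟩ := Prod.mk.inj (Subtype.ext_iff.1 heq)
    obtain rfl : c = c' := List.ofFn_injective (List.reverse_injective h1)
    obtain rfl : E = E' := Finset.map_injective _ h2
    rfl
  · rintro ⟨⟨c, E⟩, hn, hi, hE, hj⟩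
    obtain ⟨c, rfl⟩ : ∃ c' : Fin n → Bool, c = (List.ofFn c').reverse := by
      subst hn
      exact ⟨fun k => c.reverse[k]'(by simp), List.reverse_injective (by
        apply List.ext_getElem <;> simp)⟩
    have hE' : PartialContraction (wordChoiceAS 2 c).reverse E [] := by
      rwa [reverse_wordChoiceAS_two]
    obtain ⟨E, rfl⟩ : ∃ F : Finset (Fin (wordChoiceAS 2 c).length × Fin (wordChoiceAS 2 c).length),
        F.map (edgeEmb _) = E := by
      refine ⟨Finset.univ.filter fun e => edgeEmb _ e ∈ E, ?_⟩
      ext e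
      simp only [Finset.mem_map, Finset.mem_filter, Finset.mem_univ, true_and]
      constructor
      · rintro ⟨f, hf, rfl⟩
        exact hf
      · intro he
        have h1 := lt_of_getElem?_reverse (hE'.edge e he).2.1
        have h2 := lt_of_getElem?_reverse (hE'.edge e he).2.2
        rw [List.length_reverse] at h1 h2
        exact ⟨(⟨e.1, h1⟩, ⟨e.2, h2⟩), he, rfl⟩
    obtain ⟨h1, h2⟩ := (partialContraction_map_iff _ _).1 hE'
    exact ⟨⟨⟨c, E⟩, by simpa [count_ofFn] using hi, h1, h2, by simpa using hj⟩, rfl⟩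

end NoncrossingPath

theorem stmt11 (n i j : ℕ) :
    pairCountAS 2 n j i
      = Nat.card {p : List LStep // InPn n p ∧
          occCount [LStep.H, LStep.D, LStep.D] p = j ∧
          occCount [LStep.H, LStep.D] p = i} := by
  rw [NoncrossingPath.pairCountAS_eq_card_choiceContraction,
    ← NoncrossingPath.card_blockSeq_eq_card_choiceContraction,
    NoncrossingPath.card_blockSeq_eq_card_paths]
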